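/- For a finite poset P on n elements, the number of quasi-linear extensions of P (listings σ₁,…,σₙ of all elements with no repetitions such that σ_{i+1} ≰_P σ_i for all i ∈ [n−1]) is even whenever P is not a chain. -/

import Mathlib

/-!
Let `F A` be the number of quasi-linear extensions of a finite set `A`. Modulo 2 one has
`F A = ∑ F (A \ C)` over the nonempty chains `C ⊆ A`, and this is solved by `F A = 1` if `A` is a
chain and `F A = 0` otherwise: the number of ordered partitions of a nonempty `A` into two chains,
empty ones allowed, is even because the chains can be exchanged (`even_card_chainSplits`).

This is carried out by comparing two recursions. Let `U A a` count the quasi-linear extensions of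
`A` that do not start with an element `≤ a`, and let `D A a` count the chains `C ⊆ A` with all
elements `≤ a` and with `A \ C` a chain. Removing the first entry of a listing (`card_qlists`), or
the greatest element of a nonempty `C` (`card_chainSplits`), expresses these counts through
`U (A.erase b) b` and `D (A.erase b) b`. By induction `U A a = D A a` modulo 2
(`qlists_eq_chainSplits`), so if `A` is not a chain then `F A` has the parity of the number of all
splits of `A`, which is even (`even_card_qlists`).
-/

open Classical in
/-- Listings of the finset `A` with no entry `≤` its predecessor, whose first entry (if there is
one) satisfies `p`. -/
noncomputable def qlists {α : Type*} [PartialOrder α] (A : Finset α) (p : α → Prop) :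
    Finset (List α) :=
  A.val.lists.toFinset.filter fun l => l.IsChain (fun x y => ¬ y ≤ x) ∧ ∀ b ∈ l.head?, p b

open Classical in
/-- Ordered partitions of `A` into two possibly empty chains `C` and `A \ C`, encoded by `C`,
such that every element of `C` satisfies `p`. -/
noncomputable def chainSplits {α : Type*} [PartialOrder α] (A : Finset α) (p : α → Prop) :
    Finset (Finset α) :=
  A.powerset.filter fun C => IsChain (· ≤ ·) (C : Set α) ∧
    IsChain (· ≤ ·) ((A \ C : Finset α) : Set α) ∧ ∀ c ∈ C, p c

section
variable {α : Type*} [PartialOrder α]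

open Classical in
theorem mem_qlists {A : Finset α} {p : α → Prop} {l : List α} :
    l ∈ qlists A p ↔ (A.val = (l : Multiset α)) ∧
      l.IsChain (fun x y => ¬ y ≤ x) ∧ ∀ b ∈ l.head?, p b := by
  simp [qlists, Multiset.mem_lists_iff]

open Classical in
theorem mem_chainSplits {A C : Finset α} {p : α → Prop} :
    C ∈ chainSplits A p ↔ C ⊆ A ∧ IsChain (· ≤ ·) (C : Set α) ∧
      IsChain (· ≤ ·) ((A \ C : Finset α) : Set α) ∧ ∀ c ∈ C, p c := by
  simp [chainSplits]

open Classical in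
/-- Sorting the listings of a nonempty `A` by their first entry. -/
theorem card_qlists (A : Finset α) (hA : A.Nonempty) (p : α → Prop) :
    (qlists A p).card = ∑ b ∈ A.filter p, (qlists (A.erase b) (fun x => ¬ x ≤ b)).card := by
  rw [← Finset.card_sigma]
  symm
  refine Finset.card_bij (fun x _ => x.1 :: x.2) ?_ ?_ ?_
  · rintro ⟨b, l⟩ h
    simp only [Finset.mem_sigma, Finset.mem_filter, mem_qlists] at h
    obtain ⟨⟨hb, hp⟩, h1, h2, h3⟩ := h
    rw [mem_qlists]
    refine ⟨?_, ?_, by simpa using hp⟩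
    · rw [← Multiset.cons_coe, ← h1, Finset.erase_val, Multiset.cons_erase hb]
    · exact List.isChain_cons.2 ⟨h3, h2⟩
  · rintro ⟨b, l⟩ _ ⟨b', l'⟩ _ h
    simp only [List.cons.injEq] at h
    obtain ⟨rfl, rfl⟩ := h
    rfl
  · intro l hl
    rw [mem_qlists] at hl
    obtain ⟨h1, h2, h3⟩ := hl
    cases l with
    | nil => simp at h1; simp [h1] at hA
    | cons b l =>
      have hb : b ∈ A := by rw [← Finset.mem_val, h1]; simp
      rw [List.isChain_cons] at h2
      refine ⟨⟨b, l⟩, ?_, rfl⟩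
      simp only [Finset.mem_sigma, Finset.mem_filter, mem_qlists]
      refine ⟨⟨hb, by simpa using h3⟩, ?_, h2.2, h2.1⟩
      rw [Finset.erase_val, h1, ← Multiset.cons_coe, Multiset.erase_cons_head]

open Classical in
/-- Sorting the splits with `C` nonempty by the greatest element of `C`. -/
theorem card_chainSplits (A : Finset α) (p : α → Prop) (hp : ∀ a b, a ≤ b → p b → p a) :
    (chainSplits A p).card = (if IsChain (· ≤ ·) (A : Set α) then 1 else 0) +
      ∑ b ∈ A.filter p, (chainSplits (A.erase b) (· ≤ b)).card := by
  rw [← Finset.card_filter_add_card_filter_not (s := chainSplits A p) (fun C => C = ∅)]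
  congr 1
  · split_ifs with h
    · rw [Finset.card_eq_one]
      refine ⟨∅, ?_⟩
      ext C
      simp only [Finset.mem_filter, mem_chainSplits, Finset.mem_singleton]
      constructor
      · exact fun h => h.2
      · rintro rfl
        simpa using h
    · rw [Finset.card_eq_zero, Finset.filter_eq_empty_iff]
      rintro C hC rfl
      rw [mem_chainSplits] at hC
      exact h (by simpa using hC.2.2.1)
  · rw [← Finset.card_sigma]
    symm
    refine Finset.card_bij (fun x _ => insert x.1 x.2) ?_ ?_ ?_
    · rintro ⟨b, C⟩ h
      simp only [Finset.mem_sigma, Finset.mem_filter, mem_chainSplits] at h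
      obtain ⟨⟨hb, hpb⟩, h1, h2, h3, h4⟩ := h
      simp only [Finset.mem_filter, mem_chainSplits]
      refine ⟨⟨?_, ?_, ?_, ?_⟩, by simp⟩
      · exact Finset.insert_subset hb (h1.trans (Finset.erase_subset _ _))
      · rw [Finset.coe_insert]
        exact h2.insert fun c hc _ => Or.inr (h4 c hc)
      · convert h3 using 2
        ext x; simp; tauto
      · intro c hc
        rcases Finset.mem_insert.1 hc with rfl | hc
        · exact hpb
        · exact hp _ _ (h4 c hc) hpb
    · rintro ⟨b, C⟩ h ⟨b', C'⟩ h' e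
      simp only [Finset.mem_sigma, Finset.mem_filter, mem_chainSplits] at h h' e
      have hb : b ≤ b' := by
        have : b ∈ insert b' C' := e ▸ Finset.mem_insert_self _ _
        rcases Finset.mem_insert.1 this with h0 | h0
        · exact h0.le
        · exact h'.2.2.2.2 _ h0
      have hb' : b' ≤ b := by
        have : b' ∈ insert b C := e ▸ Finset.mem_insert_self _ _
        rcases Finset.mem_insert.1 this with h0 | h0
        · exact h0.le
        · exact h.2.2.2.2 _ h0
      obtain rfl := le_antisymm hb hb'
      have n1 : b ∉ C := fun hc => by simpa using h.2.1 hc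
      have n2 : b ∉ C' := fun hc => by simpa using h'.2.1 hc
      have : C = C' := by
        rw [← Finset.erase_insert n1, e, Finset.erase_insert n2]
      subst this
      rfl
    · intro C hC
      simp only [Finset.mem_filter, mem_chainSplits] at hC
      obtain ⟨⟨h1, h2, h3, h4⟩, h5⟩ := hC
      obtain ⟨b, hb, hmax⟩ := C.exists_maximal (Finset.nonempty_iff_ne_empty.2 h5)
      refine ⟨⟨b, C.erase b⟩, ?_, Finset.insert_erase hb⟩
      simp only [Finset.mem_sigma, Finset.mem_filter, mem_chainSplits]
      refine ⟨⟨h1 hb, h4 b hb⟩, Finset.erase_subset_erase _ h1, h2.mono (by simp), ?_, ?_⟩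
      · convert h3 using 2
        ext x; simp; grind
      · intro c hc
        have hc := Finset.mem_of_mem_erase hc
        rcases h2.total hc hb with h | h
        · exact h
        · exact hmax hc h

open Classical in
/-- Exchanging the two chains is a fixed-point-free involution on all the splits. -/
theorem even_card_chainSplits (A : Finset α) (hA : A.Nonempty) :
    ((chainSplits A (fun _ => True)).card : ZMod 2) = 0 := by
  rw [Finset.cast_card]
  refine Finset.sum_involution (fun C _ => A \ C) ?_ ?_ ?_ ?_
  · intro C _; decide
  · intro C hC _ h
    obtain ⟨a, ha⟩ := hA
    have := Finset.ext_iff.1 h a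
    simp [ha] at this
  · intro C hC
    rw [mem_chainSplits] at hC ⊢
    refine ⟨Finset.sdiff_subset, hC.2.2.1, ?_, by simp⟩
    rw [Finset.sdiff_sdiff_eq_self hC.1]
    exact hC.2.1
  · intro C hC
    rw [mem_chainSplits] at hC
    exact Finset.sdiff_sdiff_eq_self hC.1

open Classical in
/-- The first-entry recursion for listings and the greatest-element recursion for splits agree
modulo 2. -/
theorem qlists_eq_chainSplits (A : Finset α) : ∀ a : α,
    ((qlists A (fun x => ¬ x ≤ a)).card : ZMod 2) = (chainSplits A (· ≤ a)).card := by
  induction A using Finset.strongInduction with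
  | H A ih =>
    intro a
    rcases A.eq_empty_or_nonempty with rfl | hA
    · have h1 : qlists (∅ : Finset α) (fun x => ¬ x ≤ a) = {[]} := by
        ext l
        rw [mem_qlists, Finset.mem_singleton]
        constructor
        · intro h
          simpa using h.1.symm
        · rintro rfl
          simp
      have h2 : chainSplits (∅ : Finset α) (· ≤ a) = {∅} := by
        ext C
        rw [mem_chainSplits, Finset.mem_singleton]
        constructor
        · intro h
          simpa using h.1
        · rintro rfl
          simp
      rw [h1, h2]; simp
    · have e0 := even_card_chainSplits A hA
      rw [card_chainSplits A _ (fun _ _ _ _ => trivial), Finset.filter_true] at e0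
      rw [card_qlists A hA, card_chainSplits A _ (fun _ _ => le_trans)]
      push_cast at e0 ⊢
      rw [Finset.sum_congr rfl (fun b hb => ih (A.erase b)
        (Finset.erase_ssubset (by simp only [Finset.mem_filter] at hb; exact hb.1)) b)]
      have e1 := Finset.sum_filter_add_sum_filter_not A (· ≤ a)
        fun b => ((chainSplits (A.erase b) (· ≤ b)).card : ZMod 2)
      -- By `e0` and `e1` the two sides add up to zero, which modulo 2 means they are equal.
      refine CharTwo.add_eq_zero.1 (Eq.trans ?_ e0)
      rw [← e1, add_left_comm, add_comm (∑ b ∈ A with b ≤ a, _)]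
      congr 2
      exact Finset.sum_congr (by congr) fun _ _ => rfl

open Classical in
/-- As `A` is not a chain, no split has `C` empty, so both counts for `A` are the same sum
modulo 2 of the counts for the sets `A.erase b`. -/
theorem even_card_qlists (A : Finset α) (hA : ¬ IsChain (· ≤ ·) (A : Set α)) :
    Even (qlists A (fun _ => True)).card := by
  have hne : A.Nonempty := by
    rw [Finset.nonempty_iff_ne_empty]
    rintro rfl
    simp at hA
  have e0 := even_card_chainSplits A hne
  rw [card_chainSplits A _ (fun _ _ _ _ => trivial), if_neg hA, zero_add] at e0
  rw [← ZMod.natCast_eq_zero_iff_even, card_qlists A hne, ← e0]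
  push_cast
  exact Finset.sum_congr rfl fun b _ => qlists_eq_chainSplits (A.erase b) b

end

/-- If a finite poset `α` is not a chain, then the number of
quasi-linear extensions of `α` (listings `σ : Fin n ≃ α` with
`¬ σ (i+1) ≤ σ i` for all consecutive indices) is even. -/
theorem quasi_linear_extensions_even {α : Type*} [Fintype α] [PartialOrder α]
    (n : ℕ) (hn : n = Fintype.card α)
    (hnotchain : ¬ ∀ a b : α, a ≤ b ∨ b ≤ a) :
    Even (Nat.card {σ : Fin n ≃ α //
      ∀ i j : Fin n, (j : ℕ) = (i : ℕ) + 1 → ¬ σ j ≤ σ i}) := by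
  classical
  have key := even_card_qlists (Finset.univ : Finset α) (by
    intro h
    exact hnotchain fun a b => h.total (by simp) (by simp))
  rw [← Nat.card_eq_finsetCard] at key
  convert key using 1
  -- The map `σ ↦ List.ofFn σ` identifies the two kinds of listings.
  have hmem : ∀ σ : Fin n ≃ α, (List.ofFn σ ∈ qlists (Finset.univ : Finset α) (fun _ => True)) ↔
      ∀ i j : Fin n, (j : ℕ) = (i : ℕ) + 1 → ¬ σ j ≤ σ i := by
    intro σ
    rw [mem_qlists]
    have h1 : (Finset.univ : Finset α).val = (List.ofFn σ : Multiset α) := by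
      refine (Multiset.Nodup.ext Finset.univ.nodup
        (Multiset.coe_nodup.2 (List.nodup_ofFn.2 σ.injective))).2 fun x => ?_
      simpa [List.mem_ofFn] using σ.surjective x
    simp only [h1, true_and, implies_true, and_true, List.isChain_iff_getElem, List.getElem_ofFn,
      List.length_ofFn]
    constructor
    · rintro h ⟨i, hi⟩ ⟨j, hj⟩ e
      simp only at e
      subst e
      exact h i hj
    · intro h i hi
      exact h ⟨i, by omega⟩ ⟨i + 1, hi⟩ rfl
  refine Nat.card_eq_of_bijective (fun σ => ⟨List.ofFn σ.1, (hmem σ.1).2 σ.2⟩) ⟨?_, ?_⟩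
  · intro σ τ h
    exact Subtype.ext (DFunLike.coe_injective (List.ofFn_injective (congrArg Subtype.val h)))
  · rintro ⟨l, hl⟩
    have hv := (mem_qlists.1 hl).1
    have hlen : l.length = n := by
      rw [hn, ← Finset.card_univ, Finset.card_def, hv, Multiset.coe_card]
    subst hlen
    have hnd : l.Nodup := Multiset.coe_nodup.1 (hv ▸ Finset.univ.nodup)
    have hall : ∀ x, x ∈ l := fun x => by
      rw [← Multiset.mem_coe, ← hv]; exact Finset.mem_univ x
    have e : List.ofFn (hnd.getEquivOfForallMemList l hall) = l := List.ofFn_get l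
    exact ⟨⟨hnd.getEquivOfForallMemList l hall, (hmem _).1 (by rwa [e])⟩, Subtype.ext e⟩
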